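/- Let d ≥ 1 and let U : ℝ^d → ℝ be smooth with bounded Hessian; set c₂ = sup_{x∈ℝ^d} ‖∇²U(x)‖ (operator norm). Let β, γ > 0. Define the operator L* acting on smooth functions h : ℝ^d × ℝ^d → ℝ (variables (x,y)) by L*h = −y·∇_x h + (∇U(x) − γ y)·∇_y h + (γ/β) Δ_y h, and the carré du champ Γ(g) = (γ/β)|∇_y g|². For σ ≥ 1/2 + (β/γ)(1 + c₂ + γ)², define φ(h) = |(∇_x+∇_y)h|² + σ h² (where (∇_x+∇_y)h is the ℝ^d-valued function with components ∂_{x_i}h + ∂_{y_i}h) and Γ_φ(h) = L*(φ(h)) − 2 (∇_x+∇_y)h · (∇_x+∇_y)(L*h) − 2σ h L*h. Then for every smooth h : ℝ^{2d} → ℝ and every point z ∈ ℝ^{2d}: Γ_φ(h)(z) ≥ (1/2)|∇h(z)|² + (γ/β) Σ_{i=1}^d Σ_{j=1}^d (∂_{y_j}(∂_{x_i}h + ∂_{y_i}h)(z))². -/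

import Mathlib

open Real

/-- Partial derivative in the `i`-th position coordinate of a function on `ℝ^d × ℝ^d`. -/
noncomputable def Dx {d : ℕ} (i : Fin d)
    (h : EuclideanSpace ℝ (Fin d) × EuclideanSpace ℝ (Fin d) → ℝ)
    (z : EuclideanSpace ℝ (Fin d) × EuclideanSpace ℝ (Fin d)) : ℝ :=
  fderiv ℝ h z (EuclideanSpace.single i 1, 0)

/-- Partial derivative in the `i`-th velocity coordinate of a function on `ℝ^d × ℝ^d`. -/
noncomputable def Dy {d : ℕ} (i : Fin d)
    (h : EuclideanSpace ℝ (Fin d) × EuclideanSpace ℝ (Fin d) → ℝ)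
    (z : EuclideanSpace ℝ (Fin d) × EuclideanSpace ℝ (Fin d)) : ℝ :=
  fderiv ℝ h z (0, EuclideanSpace.single i 1)

/-- The adjoint generator `L* h = -y·∇ₓh + (∇U(x) - γ y)·∇_y h + (γ/β) Δ_y h`. -/
noncomputable def Lstar {d : ℕ} (U : EuclideanSpace ℝ (Fin d) → ℝ) (β γ : ℝ)
    (h : EuclideanSpace ℝ (Fin d) × EuclideanSpace ℝ (Fin d) → ℝ)
    (z : EuclideanSpace ℝ (Fin d) × EuclideanSpace ℝ (Fin d)) : ℝ :=
  (- ∑ i, z.2 i * Dx i h z)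
    + (∑ i, (fderiv ℝ U z.1 (EuclideanSpace.single i 1) - γ * z.2 i) * Dy i h z)
    + (γ / β) * ∑ i, Dy i (Dy i h) z

/-- `φ(h) = |(∇ₓ+∇_y)h|² + σ h²`. -/
noncomputable def phiFn {d : ℕ} (σ : ℝ)
    (h : EuclideanSpace ℝ (Fin d) × EuclideanSpace ℝ (Fin d) → ℝ)
    (z : EuclideanSpace ℝ (Fin d) × EuclideanSpace ℝ (Fin d)) : ℝ :=
  (∑ i, (Dx i h z + Dy i h z) ^ 2) + σ * (h z) ^ 2

/-- `Γ_φ(h) = L*(φ(h)) - D_hφ(h)(L*h)`. -/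
noncomputable def GammaPhi {d : ℕ} (U : EuclideanSpace ℝ (Fin d) → ℝ) (β γ σ : ℝ)
    (h : EuclideanSpace ℝ (Fin d) × EuclideanSpace ℝ (Fin d) → ℝ)
    (z : EuclideanSpace ℝ (Fin d) × EuclideanSpace ℝ (Fin d)) : ℝ :=
  Lstar U β γ (phiFn σ h) z
    - 2 * (∑ i, (Dx i h z + Dy i h z) * (Dx i (Lstar U β γ h) z + Dy i (Lstar U β γ h) z))
    - 2 * σ * h z * Lstar U β γ h z

/-!
`L*` is a diffusion operator with drift `b(x, y) = (-y, ∇U(x) - γ y)` and constant diffusion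
directions. Its Leibniz rule gives a carré du champ term for each square in `φ(h)`, and
`[∂_v, L*] = ∂_{∂_v b}` gives a first-order term for each diagonal direction `v = (eᵢ, eᵢ)`. With
`g = ∇ₓh + ∇_y h`, linearity collapses the sum of these first-order terms to `-2 Dh(Db(g, g))`.
The `-y` component of the drift contributes `2⟨∇ₓh, g⟩`, which contains the missing coercivity in
`∇ₓh`; every other first-order term has a factor `∇_y h`, and `2σ(γ/β)|∇_y h|²` pays for it after
completing a square.
-/

open scoped Gradient InnerProductSpace ContDiff

section DirDeriv

variable {E : Type*} [NormedAddCommGroup E] [NormedSpace ℝ E] {f g : E → ℝ}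

/-- The directional derivative `∂_v f` along a constant vector `v`, as a function of the base point
so that it can be iterated. -/
noncomputable def dirDeriv (v : E) (f : E → ℝ) (z : E) : ℝ :=
  fderiv ℝ f z v

lemma contDiff_dirDeriv {m n : ℕ∞ω} (hf : ContDiff ℝ n f) (hmn : m + 1 ≤ n) (v : E) :
    ContDiff ℝ m (dirDeriv v f) :=
  (hf.fderiv_right hmn).clm_apply contDiff_const

lemma differentiable_dirDeriv (hf : ContDiff ℝ 2 f) (v : E) : Differentiable ℝ (dirDeriv v f) :=
  (contDiff_dirDeriv hf one_add_one_eq_two.le v).differentiable_one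

lemma dirDeriv_add (v : E) (hf : Differentiable ℝ f) (hg : Differentiable ℝ g) :
    dirDeriv v (f + g) = dirDeriv v f + dirDeriv v g := by
  ext z
  simp [dirDeriv, fderiv_add (hf z) (hg z)]

lemma dirDeriv_const_smul (v : E) (c : ℝ) (hf : Differentiable ℝ f) :
    dirDeriv v (c • f) = c • dirDeriv v f := by
  ext z
  simp [dirDeriv, fderiv_const_smul (hf z)]

lemma dirDeriv_sum {ι : Type*} {s : Finset ι} (v : E) {F : ι → E → ℝ}
    (hF : ∀ i ∈ s, Differentiable ℝ (F i)) :
    dirDeriv v (∑ i ∈ s, F i) = ∑ i ∈ s, dirDeriv v (F i) := by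
  ext z
  simp [dirDeriv, fderiv_sum fun i hi => hF i hi z]

lemma dirDeriv_mul (v : E) (hf : Differentiable ℝ f) (hg : Differentiable ℝ g) :
    dirDeriv v (f * g) = f * dirDeriv v g + g * dirDeriv v f := by
  ext z
  simp [dirDeriv, fderiv_mul (hf z) (hg z)]

lemma fderiv_dirDeriv_apply {z : E} (hf : DifferentiableAt ℝ (fderiv ℝ f) z) (u v : E) :
    fderiv ℝ (dirDeriv v f) z u = fderiv ℝ (fderiv ℝ f) z u v := by
  simp [show dirDeriv v f = fun w => fderiv ℝ f w v from rfl,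
    fderiv_clm_apply hf (differentiableAt_const v)]

lemma differentiable_fderiv (hf : ContDiff ℝ 2 f) : Differentiable ℝ (fderiv ℝ f) :=
  (hf.fderiv_right one_add_one_eq_two.le).differentiable_one

lemma dirDeriv_comm (hf : ContDiff ℝ 2 f) (u v : E) :
    dirDeriv u (dirDeriv v f) = dirDeriv v (dirDeriv u f) := by
  ext z
  simpa only [dirDeriv, fderiv_dirDeriv_apply (differentiable_fderiv hf z)] using
    hf.contDiffAt.isSymmSndFDerivAt (by simp) u v

end DirDeriv

section DiffusionOp

variable {E ι : Type*} [NormedAddCommGroup E] [NormedSpace ℝ E] [Fintype ι]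
  (b : E → E) (κ : ℝ) (e : ι → E) {f g : E → ℝ}

/-- The second-order operator `f ↦ b·∇f + κ ∑ᵢ ∂_{eᵢ}² f` with drift field `b` and constant
diffusion directions `eᵢ`. -/
noncomputable def diffusionOp (f : E → ℝ) (z : E) : ℝ :=
  fderiv ℝ f z (b z) + κ * ∑ i, dirDeriv (e i) (dirDeriv (e i) f) z

lemma diffusionOp_add (hf : ContDiff ℝ 2 f) (hg : ContDiff ℝ 2 g) :
    diffusionOp b κ e (f + g) = diffusionOp b κ e f + diffusionOp b κ e g := by
  have hf₁ := hf.differentiable two_ne_zero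
  have hg₁ := hg.differentiable two_ne_zero
  ext z
  simp only [diffusionOp, fderiv_add (hf₁ z) (hg₁ z), dirDeriv_add _ hf₁ hg₁,
    dirDeriv_add _ (differentiable_dirDeriv hf _) (differentiable_dirDeriv hg _), Pi.add_apply,
    add_apply, Finset.sum_add_distrib]
  ring

lemma diffusionOp_const_smul (c : ℝ) (hf : ContDiff ℝ 2 f) :
    diffusionOp b κ e (c • f) = c • diffusionOp b κ e f := by
  have hf₁ := hf.differentiable two_ne_zero
  ext z
  simp only [diffusionOp, fderiv_const_smul (hf₁ z), dirDeriv_const_smul _ c hf₁,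
    dirDeriv_const_smul _ c (differentiable_dirDeriv hf _), Pi.smul_apply, smul_apply,
    smul_eq_mul, ← Finset.mul_sum]
  ring

lemma diffusionOp_sum {α : Type*} (s : Finset α) {F : α → E → ℝ}
    (hF : ∀ a ∈ s, ContDiff ℝ 2 (F a)) :
    diffusionOp b κ e (∑ a ∈ s, F a) = ∑ a ∈ s, diffusionOp b κ e (F a) := by
  have hF₁ : ∀ a ∈ s, Differentiable ℝ (F a) := fun a ha => (hF a ha).differentiable two_ne_zero
  ext z
  simp only [diffusionOp, fderiv_sum fun a ha => hF₁ a ha z, dirDeriv_sum _ hF₁,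
    dirDeriv_sum _ fun a ha => differentiable_dirDeriv (hF a ha) _, Finset.sum_apply,
    sum_apply, Finset.sum_add_distrib, ← Finset.mul_sum]
  rw [Finset.sum_comm]

lemma diffusionOp_mul (hf : ContDiff ℝ 2 f) (hg : ContDiff ℝ 2 g) (z : E) :
    diffusionOp b κ e (f * g) z = f z * diffusionOp b κ e g z + g z * diffusionOp b κ e f z
      + 2 * κ * ∑ i, dirDeriv (e i) f z * dirDeriv (e i) g z := by
  have hf₁ := hf.differentiable two_ne_zero
  have hg₁ := hg.differentiable two_ne_zero
  have hf₂ := differentiable_dirDeriv hf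
  have hg₂ := differentiable_dirDeriv hg
  have second_order (v : E) : dirDeriv v (dirDeriv v (f * g)) z =
      f z * dirDeriv v (dirDeriv v g) z + g z * dirDeriv v (dirDeriv v f) z
        + 2 * (dirDeriv v f z * dirDeriv v g z) := by
    rw [dirDeriv_mul v hf₁ hg₁, dirDeriv_add v (hf₁.mul (hg₂ v)) (hg₁.mul (hf₂ v)),
      dirDeriv_mul v hf₁ (hg₂ v), dirDeriv_mul v hg₁ (hf₂ v)]
    simp only [Pi.add_apply, Pi.mul_apply]
    ring
  simp only [diffusionOp, second_order, fderiv_mul (hf₁ z) (hg₁ z), add_apply, smul_apply,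
    smul_eq_mul, Finset.sum_add_distrib, ← Finset.mul_sum]
  ring

lemma diffusionOp_sq (hf : ContDiff ℝ 2 f) (z : E) :
    diffusionOp b κ e (f ^ 2) z =
      2 * f z * diffusionOp b κ e f z + 2 * κ * ∑ i, dirDeriv (e i) f z ^ 2 := by
  simp only [pow_two, diffusionOp_mul b κ e hf hf]
  ring

lemma dirDeriv_diffusionOp (hb : Differentiable ℝ b) (hf : ContDiff ℝ 3 f) (v z : E) :
    dirDeriv v (diffusionOp b κ e f) z =
      diffusionOp b κ e (dirDeriv v f) z + fderiv ℝ f z (fderiv ℝ b z v) := by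
  have hf₂ : ContDiff ℝ 2 f := hf.of_le (by norm_num)
  have hDf (u : E) : ContDiff ℝ 2 (dirDeriv u f) := contDiff_dirDeriv hf two_add_one_eq_three.le u
  have hDDf (i : ι) : Differentiable ℝ (dirDeriv (e i) (dirDeriv (e i) f)) :=
    differentiable_dirDeriv (hDf (e i)) (e i)
  have hfderiv := differentiable_fderiv hf₂
  have first_order : dirDeriv v (fun w => fderiv ℝ f w (b w)) z =
      fderiv ℝ (dirDeriv v f) z (b z) + fderiv ℝ f z (fderiv ℝ b z v) := by
    rw [fderiv_dirDeriv_apply (hfderiv z), dirDeriv, fderiv_clm_apply (hfderiv z) (hb z), add_comm]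
    simp [hf₂.contDiffAt.isSymmSndFDerivAt (by simp) v (b z)]
  have second_order (i : ι) : dirDeriv v (dirDeriv (e i) (dirDeriv (e i) f)) =
      dirDeriv (e i) (dirDeriv (e i) (dirDeriv v f)) := by
    rw [dirDeriv_comm (hDf (e i)), dirDeriv_comm hf₂]
  have split : diffusionOp b κ e f =
      (fun w => fderiv ℝ f w (b w)) + κ • ∑ i, dirDeriv (e i) (dirDeriv (e i) f) := by
    ext w
    simp [diffusionOp]
  have hsum := Differentiable.sum (u := Finset.univ) fun i _ => hDDf i
  rw [split, dirDeriv_add v (hfderiv.clm_apply hb) (hsum.const_smul κ),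
    dirDeriv_const_smul v κ hsum, dirDeriv_sum v fun i _ => hDDf i, Pi.add_apply, first_order]
  simp only [second_order, diffusionOp, Pi.smul_apply, Finset.sum_apply, smul_eq_mul]
  ring

lemma diffusionOp_dirDeriv_sq_sub (hb : Differentiable ℝ b) (hf : ContDiff ℝ 3 f) (v z : E) :
    diffusionOp b κ e (dirDeriv v f ^ 2) z
        - 2 * (dirDeriv v f z * dirDeriv v (diffusionOp b κ e f) z) =
      2 * κ * ∑ i, dirDeriv (e i) (dirDeriv v f) z ^ 2
        - 2 * (dirDeriv v f z * fderiv ℝ f z (fderiv ℝ b z v)) := by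
  rw [diffusionOp_sq b κ e (contDiff_dirDeriv hf two_add_one_eq_three.le v),
    dirDeriv_diffusionOp b κ e hb hf]
  ring

end DiffusionOp

section InnerProduct

variable {F : Type*} [NormedAddCommGroup F] [InnerProductSpace ℝ F]

section Gradient

variable [CompleteSpace F] (U : F → ℝ)

variable {U} in
lemma contDiff_gradient {m n : ℕ∞ω} (hU : ContDiff ℝ n U) (hmn : m + 1 ≤ n) :
    ContDiff ℝ m (∇ U) :=
  -- Over `ℝ` the conjugate-linear Riesz isometry is linear, definitionally.
  let riesz : StrongDual ℝ F ≃ₗᵢ[ℝ] F := (InnerProductSpace.toDual ℝ F).symm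
  riesz.contDiff.comp (hU.fderiv_right hmn)

lemma norm_fderiv_gradient (x : F) : ‖fderiv ℝ (∇ U) x‖ = ‖iteratedFDeriv ℝ 2 U x‖ := by
  let riesz : StrongDual ℝ F ≃ₗᵢ[ℝ] F := (InnerProductSpace.toDual ℝ F).symm
  calc ‖fderiv ℝ (∇ U) x‖ = ‖iteratedFDeriv ℝ 1 (riesz ∘ fderiv ℝ U) x‖ :=
        (norm_iteratedFDeriv_one (∇ U)).symm
    _ = ‖iteratedFDeriv ℝ 1 (fderiv ℝ U) x‖ := riesz.norm_iteratedFDeriv_comp_left _ x 1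
    _ = ‖iteratedFDeriv ℝ 2 U x‖ := norm_iteratedFDeriv_fderiv

/-- The drift `(x, y) ↦ (-y, ∇U(x) - γ y)` of the adjoint Langevin generator. -/
noncomputable def langevinDrift (γ : ℝ) (z : F × F) : F × F :=
  (-z.2, ∇ U z.1 - γ • z.2)

variable {U} in
lemma hasFDerivAt_langevinDrift (hU : ContDiff ℝ 2 U) (γ : ℝ) (z : F × F) :
    HasFDerivAt (langevinDrift U γ)
      ((-ContinuousLinearMap.snd ℝ F F).prod
        (fderiv ℝ (∇ U) z.1 ∘L ContinuousLinearMap.fst ℝ F F -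
          γ • ContinuousLinearMap.snd ℝ F F)) z := by
  have hgrad : HasFDerivAt (∇ U) (fderiv ℝ (∇ U) z.1) z.1 :=
    ((contDiff_gradient hU one_add_one_eq_two.le).differentiable_one z.1).hasFDerivAt
  exact hasFDerivAt_snd.neg.prodMk
    ((hgrad.comp z hasFDerivAt_fst).sub (hasFDerivAt_snd.const_smul γ))

end Gradient

lemma half_norm_sq_add_norm_sq_le {A : F →L[ℝ] F} {c γ r : ℝ} (hA : ‖A‖ ≤ c) (hγ : 0 ≤ γ)
    (hr : (1 + c + γ) ^ 2 ≤ r) (p q : F) :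
    1 / 2 * (‖p‖ ^ 2 + ‖q‖ ^ 2) ≤
      2 * r * ‖q‖ ^ 2 + 2 * (⟪p, p + q⟫_ℝ + γ * ⟪q, p + q⟫_ℝ - ⟪q, A (p + q)⟫_ℝ) := by
  have hc : 0 ≤ c := (norm_nonneg A).trans hA
  have cross_term : -(‖p‖ * ‖q‖) ≤ ⟪p, q⟫_ℝ := neg_le_of_abs_le (abs_real_inner_le_norm p q)
  have hessian_term : ⟪q, A (p + q)⟫_ℝ ≤ c * ‖p‖ * ‖q‖ + c * ‖q‖ ^ 2 :=
    calc ⟪q, A (p + q)⟫_ℝ ≤ ‖q‖ * ‖A (p + q)‖ := real_inner_le_norm _ _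
      _ ≤ ‖q‖ * (c * (‖p‖ + ‖q‖)) := by
        gcongr
        exact A.le_of_opNorm_le_of_le hA (norm_add_le p q)
      _ = c * ‖p‖ * ‖q‖ + c * ‖q‖ ^ 2 := by ring
  have dissipation : (1 + c + γ) ^ 2 * ‖q‖ ^ 2 ≤ r * ‖q‖ ^ 2 := by gcongr
  have scaled_cross_term : (1 + γ) * -(‖p‖ * ‖q‖) ≤ (1 + γ) * ⟪p, q⟫_ℝ := by gcongr
  -- The `‖p‖²` terms are absorbed into this square, leaving a nonnegative multiple of `‖q‖²`.
  have square : 0 ≤ (3 * ‖p‖ - 2 * (1 + c + γ) * ‖q‖) ^ 2 := sq_nonneg _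
  have remainder : 0 ≤ (4 / 3 * (1 + c + γ) ^ 2 + 2 * γ - 2 * c - 1 / 2) * ‖q‖ ^ 2 := by
    refine mul_nonneg ?_ (sq_nonneg _)
    nlinarith [sq_nonneg (c + γ)]
  rw [inner_add_right, inner_add_right, real_inner_self_eq_norm_sq, real_inner_self_eq_norm_sq,
    real_inner_comm p q]
  linarith

end InnerProduct

lemma inner_toLp_apply_single {ι : Type*} [Fintype ι] [DecidableEq ι]
    (l : EuclideanSpace ℝ ι →L[ℝ] ℝ) (u : EuclideanSpace ℝ ι) :
    ⟪WithLp.toLp 2 fun i => l (EuclideanSpace.single i 1), u⟫_ℝ = l u := by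
  conv_rhs => rw [← (EuclideanSpace.basisFun ι ℝ).sum_repr u]
  simp [PiLp.inner_apply]

section PhaseSpace

variable {d : ℕ} {U : EuclideanSpace ℝ (Fin d) → ℝ}
  (h : EuclideanSpace ℝ (Fin d) × EuclideanSpace ℝ (Fin d) → ℝ)
  (z : EuclideanSpace ℝ (Fin d) × EuclideanSpace ℝ (Fin d))

/-- The position gradient `∇ₓh`, assembled from the partial derivatives `Dx`. -/
noncomputable def gradX : EuclideanSpace ℝ (Fin d) :=
  WithLp.toLp 2 fun i => Dx i h z

/-- The velocity gradient `∇_y h`, assembled from the partial derivatives `Dy`. -/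
noncomputable def gradY : EuclideanSpace ℝ (Fin d) :=
  WithLp.toLp 2 fun i => Dy i h z

/-- The direction `(eᵢ, eᵢ)`, whose derivative is the `i`-th component of `∇ₓ + ∇_y`. -/
noncomputable def diagDir (i : Fin d) : EuclideanSpace ℝ (Fin d) × EuclideanSpace ℝ (Fin d) :=
  (EuclideanSpace.single i 1, EuclideanSpace.single i 1)

/-- The direction `(0, eᵢ)`, whose derivative is `∂_{yᵢ}`. -/
noncomputable def velocityDir (i : Fin d) : EuclideanSpace ℝ (Fin d) × EuclideanSpace ℝ (Fin d) :=
  (0, EuclideanSpace.single i 1)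

lemma Dy_eq_dirDeriv (i : Fin d) : Dy i = dirDeriv (velocityDir i) := rfl

lemma norm_gradX_sq : ‖gradX h z‖ ^ 2 = ∑ i, Dx i h z ^ 2 :=
  EuclideanSpace.real_norm_sq_eq _

lemma norm_gradY_sq : ‖gradY h z‖ ^ 2 = ∑ i, Dy i h z ^ 2 :=
  EuclideanSpace.real_norm_sq_eq _

lemma fderiv_eq_inner_gradX_add_inner_gradY
    (v : EuclideanSpace ℝ (Fin d) × EuclideanSpace ℝ (Fin d)) :
    fderiv ℝ h z v = ⟪gradX h z, v.1⟫_ℝ + ⟪gradY h z, v.2⟫_ℝ := by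
  have position : ⟪gradX h z, v.1⟫_ℝ = fderiv ℝ h z (v.1, 0) :=
    inner_toLp_apply_single (fderiv ℝ h z ∘L ContinuousLinearMap.inl ℝ _ _) v.1
  have velocity : ⟪gradY h z, v.2⟫_ℝ = fderiv ℝ h z (0, v.2) :=
    inner_toLp_apply_single (fderiv ℝ h z ∘L ContinuousLinearMap.inr ℝ _ _) v.2
  rw [position, velocity, ← map_add, Prod.mk_add_mk, add_zero, zero_add]

lemma Dx_add_Dy_eq_dirDeriv (i : Fin d) :
    (fun z => Dx i h z + Dy i h z) = dirDeriv (diagDir i) h := by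
  ext z
  simp [Dx, Dy, dirDeriv, diagDir, ← map_add]

lemma phiFn_eq (σ : ℝ) : phiFn σ h = ∑ i, dirDeriv (diagDir i) h ^ 2 + σ • h ^ 2 := by
  ext z
  simp [phiFn, ← Dx_add_Dy_eq_dirDeriv]

lemma Lstar_eq_diffusionOp (U : EuclideanSpace ℝ (Fin d) → ℝ) (β γ : ℝ) :
    Lstar U β γ h = diffusionOp (langevinDrift U γ) (γ / β) velocityDir h := by
  ext z
  have gradient_coord (i : Fin d) : fderiv ℝ U z.1 (EuclideanSpace.single i 1) = ∇ U z.1 i := by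
    rw [← inner_gradient_left, EuclideanSpace.inner_single_right]
    simp
  simp [diffusionOp, fderiv_eq_inner_gradX_add_inner_gradY h z, langevinDrift, gradX, gradY, Lstar,
    gradient_coord, PiLp.inner_apply, Dy_eq_dirDeriv]

lemma sum_dirDeriv_diagDir_smul :
    ∑ i, dirDeriv (diagDir i) h z • diagDir i =
      (gradX h z + gradY h z, gradX h z + gradY h z) := by
  have coord (i : Fin d) : dirDeriv (diagDir i) h z = (gradX h z + gradY h z) i :=
    (congrFun (Dx_add_Dy_eq_dirDeriv h i) z).symm
  have expand : ∑ i, (gradX h z + gradY h z) i • EuclideanSpace.single i (1 : ℝ) =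
      gradX h z + gradY h z := by
    simpa only [EuclideanSpace.basisFun_repr, EuclideanSpace.basisFun_apply] using
      (EuclideanSpace.basisFun (Fin d) ℝ).sum_repr (gradX h z + gradY h z)
  simp only [coord]
  ext1 <;> simpa only [diagDir, Prod.smul_mk, Prod.fst_sum, Prod.snd_sum] using expand

lemma sum_dirDeriv_diagDir_mul_fderiv_langevinDrift (hU : ContDiff ℝ 2 U) (γ : ℝ) :
    ∑ i, dirDeriv (diagDir i) h z * fderiv ℝ h z (fderiv ℝ (langevinDrift U γ) z (diagDir i)) =
      ⟪gradY h z, fderiv ℝ (∇ U) z.1 (gradX h z + gradY h z)⟫_ℝ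
        - ⟪gradX h z, gradX h z + gradY h z⟫_ℝ - γ * ⟪gradY h z, gradX h z + gradY h z⟫_ℝ := by
  set g := gradX h z + gradY h z
  calc
    _ = fderiv ℝ h z (fderiv ℝ (langevinDrift U γ) z
          (∑ i, dirDeriv (diagDir i) h z • diagDir i)) := by
        simp only [map_sum, map_smul, smul_eq_mul]
    _ = fderiv ℝ h z (-g, fderiv ℝ (∇ U) z.1 g - γ • g) := by
        rw [sum_dirDeriv_diagDir_smul, (hasFDerivAt_langevinDrift hU γ z).fderiv]
        rfl
    _ = _ := by
        rw [fderiv_eq_inner_gradX_add_inner_gradY, inner_neg_right, inner_sub_right,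
          real_inner_smul_right]
        ring

variable {h z}

lemma Lstar_phiFn (U : EuclideanSpace ℝ (Fin d) → ℝ) (β γ σ : ℝ) (hh : ContDiff ℝ 3 h) :
    Lstar U β γ (phiFn σ h) z =
      ∑ i, Lstar U β γ (dirDeriv (diagDir i) h ^ 2) z + σ * Lstar U β γ (h ^ 2) z := by
  have hDh : ∀ i ∈ Finset.univ, ContDiff ℝ 2 (dirDeriv (diagDir i) h ^ 2) := fun i _ =>
    (contDiff_dirDeriv hh two_add_one_eq_three.le (diagDir i)).pow 2
  have hsum : ContDiff ℝ 2 (∑ i, dirDeriv (diagDir i) h ^ 2) := by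
    simpa only [Finset.sum_fn] using ContDiff.sum hDh
  have hsq : ContDiff ℝ 2 (h ^ 2) := (hh.of_le (by norm_num)).pow 2
  have hsmul : ContDiff ℝ 2 (σ • h ^ 2) := hsq.const_smul σ
  simp only [phiFn_eq, Lstar_eq_diffusionOp]
  rw [diffusionOp_add _ _ _ hsum hsmul, diffusionOp_sum _ _ _ _ hDh,
    diffusionOp_const_smul _ _ _ _ hsq]
  simp

lemma GammaPhi_eq (hU : ContDiff ℝ 2 U) (hh : ContDiff ℝ 3 h) (β γ σ : ℝ) :
    GammaPhi U β γ σ h z =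
      2 * (γ / β) * (∑ i, ∑ j, Dy j (fun w => Dx i h w + Dy i h w) z ^ 2)
      + 2 * (σ * (γ / β)) * ‖gradY h z‖ ^ 2
      + 2 * (⟪gradX h z, gradX h z + gradY h z⟫_ℝ + γ * ⟪gradY h z, gradX h z + gradY h z⟫_ℝ
        - ⟪gradY h z, fderiv ℝ (∇ U) z.1 (gradX h z + gradY h z)⟫_ℝ) := by
  have hb : Differentiable ℝ (langevinDrift U γ) :=
    fun w => (hasFDerivAt_langevinDrift hU γ w).differentiableAt
  have gradient_term (i : Fin d) : Lstar U β γ (dirDeriv (diagDir i) h ^ 2) z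
      - 2 * (dirDeriv (diagDir i) h z * dirDeriv (diagDir i) (Lstar U β γ h) z) =
        2 * (γ / β) * (∑ j, Dy j (dirDeriv (diagDir i) h) z ^ 2)
        - 2 * (dirDeriv (diagDir i) h z *
            fderiv ℝ h z (fderiv ℝ (langevinDrift U γ) z (diagDir i))) := by
    simpa only [← Lstar_eq_diffusionOp, Dy_eq_dirDeriv] using
      diffusionOp_dirDeriv_sq_sub _ (γ / β) velocityDir hb hh (diagDir i) z
  have zeroth_order_term : Lstar U β γ (h ^ 2) z - 2 * h z * Lstar U β γ h z =
      2 * (γ / β) * ‖gradY h z‖ ^ 2 := by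
    rw [Lstar_eq_diffusionOp, Lstar_eq_diffusionOp, diffusionOp_sq _ _ _ (hh.of_le (by norm_num)),
      norm_gradY_sq]
    simp only [Dy_eq_dirDeriv, add_sub_cancel_left]
  calc
    _ = ∑ i, (Lstar U β γ (dirDeriv (diagDir i) h ^ 2) z
          - 2 * (dirDeriv (diagDir i) h z * dirDeriv (diagDir i) (Lstar U β γ h) z))
        + σ * (Lstar U β γ (h ^ 2) z - 2 * h z * Lstar U β γ h z) := by
      rw [GammaPhi, Lstar_phiFn U β γ σ hh]
      simp only [← Dx_add_Dy_eq_dirDeriv, Finset.sum_sub_distrib, ← Finset.mul_sum]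
      ring
    _ = _ := by
      simp only [gradient_term, zeroth_order_term, Finset.sum_sub_distrib, ← Finset.mul_sum,
        sum_dirDeriv_diagDir_mul_fderiv_langevinDrift h z hU,
        Dx_add_Dy_eq_dirDeriv]
      ring

end PhaseSpace

theorem stmt_2_general {d : ℕ} {U : EuclideanSpace ℝ (Fin d) → ℝ} (hU : ContDiff ℝ 2 U)
    {h : EuclideanSpace ℝ (Fin d) × EuclideanSpace ℝ (Fin d) → ℝ} (hh : ContDiff ℝ 3 h)
    {z : EuclideanSpace ℝ (Fin d) × EuclideanSpace ℝ (Fin d)} {c β γ σ : ℝ}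
    (hc : ‖iteratedFDeriv ℝ 2 U z.1‖ ≤ c) (hβ : 0 < β) (hγ : 0 < γ)
    (hσ : (β / γ) * (1 + c + γ) ^ 2 ≤ σ) :
    (1 / 2) * ((∑ i, Dx i h z ^ 2) + ∑ i, Dy i h z ^ 2)
      + (γ / β) * ∑ i, ∑ j, Dy j (fun w => Dx i h w + Dy i h w) z ^ 2
    ≤ GammaPhi U β γ σ h z := by
  have hr : (1 + c + γ) ^ 2 ≤ σ * (γ / β) :=
    calc (1 + c + γ) ^ 2 = (β / γ) * (1 + c + γ) ^ 2 * (γ / β) := by field_simp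
      _ ≤ σ * (γ / β) := by gcongr
  have coercive := half_norm_sq_add_norm_sq_le ((norm_fderiv_gradient U z.1).trans_le hc) hγ.le hr
    (gradX h z) (gradY h z)
  have mixed_nonneg : 0 ≤ (γ / β) * ∑ i, ∑ j, Dy j (fun w => Dx i h w + Dy i h w) z ^ 2 := by
    positivity
  rw [GammaPhi_eq hU hh, ← norm_gradX_sq, ← norm_gradY_sq]
  linarith

theorem stmt_2 (d : ℕ) (hd : 1 ≤ d) (U : EuclideanSpace ℝ (Fin d) → ℝ)
    (hU : ContDiff ℝ (⊤ : ℕ∞) U)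
    (c₂ : ℝ) (hc₂ : ∀ x, ‖iteratedFDeriv ℝ 2 U x‖ ≤ c₂)
    (β γ : ℝ) (hβ : 0 < β) (hγ : 0 < γ)
    (σ : ℝ) (hσ : 1/2 + (β/γ) * (1 + c₂ + γ)^2 ≤ σ)
    (h : EuclideanSpace ℝ (Fin d) × EuclideanSpace ℝ (Fin d) → ℝ)
    (hh : ContDiff ℝ (⊤ : ℕ∞) h)
    (z : EuclideanSpace ℝ (Fin d) × EuclideanSpace ℝ (Fin d)) :
    (1/2) * ((∑ i, (Dx i h z) ^ 2) + ∑ i, (Dy i h z) ^ 2)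
      + (γ/β) * ∑ i, ∑ j, (Dy j (fun w => Dx i h w + Dy i h w) z) ^ 2
    ≤ GammaPhi U β γ σ h z := by
  exact stmt_2_general (mod_cast contDiff_infty.1 hU 2) (mod_cast contDiff_infty.1 hh 3) (hc₂ z.1)
    hβ hγ (by linarith)
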